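/- Assume char(F) = 3 and d ≥ 8. If u ∈ M is a word with deg_{x_i}(u) = 3 for every 1 ≤ i ≤ 8, then u = 0 in A_{3,d}. -/

import Mathlib

open FreeAlgebra MulOpposite

/-- The alphabet: `(k, false)` is the letter `x_{k+1}`, `(k, true)` is `x_{k+1}ᵀ`. -/
abbrev Ltr (d : ℕ) := Fin d × Bool

/-- The free (unital) associative algebra on the `2d` letters.  The free non-unital
algebra `M_F` sits inside it as the span of the nonempty words. -/
abbrev FA (F : Type) [Field F] (d : ℕ) := FreeAlgebra F (Ltr d)

variable (F : Type) [Field F] (d : ℕ)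

/-- The word in the free algebra corresponding to a list of letters
(the empty list gives `1`, the unit). -/
def wordOf (l : List (Ltr d)) : FA F d := (l.map (FreeAlgebra.ι F)).prod

/-- The transpose: the linear anti-automorphism with `x ↦ xᵀ`, `xᵀ ↦ x`. -/
def tp (a : FA F d) : FA F d :=
  ((FreeAlgebra.lift F fun p : Ltr d => op (FreeAlgebra.ι F (p.1, !p.2))) a).unop

/-- `ā = a - aᵀ`. -/
def bar (a : FA F d) : FA F d := a - tp F d a

/-- `T(a,b,c) = a b̄ c̄ + b̄ aᵀ c̄ + b̄ c̄ a`. -/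
def Trel (a b c : FA F d) : FA F d :=
  a * bar F d b * bar F d c + bar F d b * tp F d a * bar F d c + bar F d b * bar F d c * a

/-- The copy of the free non-unital algebra `M_F`, i.e. the span of the nonempty words. -/
def MFsub : Submodule F (FA F d) :=
  Submodule.span F {w | ∃ l : List (Ltr d), l ≠ [] ∧ w = wordOf F d l}

/-- The two-sided ideal such that `A_{3,d} = M_F / (idealA ∩ M_F)`: it is generated by
`a³` for `a ∈ M_F` together with `T(a,b,c)` for `a, b, c ∈ M_F`.  (Since all generators lie in
`M_F`, its intersection with `M_F` is exactly the two-sided ideal of the non-unital algebra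
`M_F` generated by these elements; in fact it is contained in `M_F`.)
An element `u ∈ M_F` is zero in `A_{3,d}` iff `u ∈ idealA F d`. -/
def idealA : TwoSidedIdeal (FA F d) :=
  TwoSidedIdeal.span
    ({x | ∃ a ∈ MFsub F d, x = a ^ 3} ∪
     {x | ∃ a ∈ MFsub F d, ∃ b ∈ MFsub F d, ∃ c ∈ MFsub F d, x = Trel F d a b c})

/-!
In a ring with involution in which `T(a, b, c) = 0`, any product with four skew factors vanishes,
whatever stands between them. It is therefore enough to rewrite a word as a combination of products
with four bars `w̄`, where `w` is a word of length at most two.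

Both `x - xᵀ` and the commutators of letters are combinations of products with one such bar, so,
modulo products with one more bar, a product only depends on the multidegrees of the words between
its bars. A word of degree at least three in some `y` thus gains a first bar, being congruent to
some `y³ m = 0`. Suppose that `k ≥ 1` bars have been gained. The identity `T(a, b, c) = 0` moves all
letters outside the bars next to the first one, giving products `u w̄ v t` in which `w` and `t`
together have at most `2k` letters. If at least `2k + 2` letters have degree at least three in the
product, two of them, `y` and `z`, do not occur in `w` and `t`, and the relations obtained from
`y³ = z³ = (y + z)³ = 0` rewrite `u w̄ v` with two bars. For the fourth bar this takes eight
letters.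
-/

section Involution

variable {R : Type*} [Ring R] [StarRing R]

/-- The element `ā = a - a⋆` of a ring with involution. -/
def skewPart (a : R) : R := a - star a

theorem skewPart_mem_skewAdjoint (a : R) : skewPart a ∈ skewAdjoint R := by
  simp only [skewPart, skewAdjoint.mem_iff, star_sub, star_star, neg_sub]

theorem commutator_eq_skewPart (a b : R) :
    a * b - b * a = skewPart (a * b) - skewPart b * a - star b * skewPart a := by
  simp only [skewPart, star_mul]
  noncomm_ring

variable (R) in
/-- The rings with involution satisfying the identity `T(a, b, c) = 0`, written for arbitrary
skew elements `s`, `t` in place of `b̄`, `c̄`. -/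
class IsTRing : Prop where
  trel (a : R) {s t : R} (hs : s ∈ skewAdjoint R) (ht : t ∈ skewAdjoint R) :
    a * s * t + s * star a * t + s * t * a = 0

namespace IsTRing

variable [IsTRing R] {s t p q : R}

theorem skew_mul_mul_skew (hs : s ∈ skewAdjoint R) (ht : t ∈ skewAdjoint R) (u : R) :
    s * u * t = -(star u * s * t) - s * t * star u := by
  have h := trel (star u) hs ht
  rw [star_star] at h
  linear_combination (norm := abel) h

theorem skew_mul_skew_mul (hs : s ∈ skewAdjoint R) (ht : t ∈ skewAdjoint R) (u : R) :
    s * t * u = -(u * s * t) - s * star u * t := by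
  linear_combination (norm := abel) trel u hs ht

theorem skew_mul_mul_skew_mul (hs : s ∈ skewAdjoint R) (ht : t ∈ skewAdjoint R) (u v : R) :
    s * u * t * v = 2 • (star u * v * s * t) + star u * s * star v * t +
      s * (star v * u) * t := by
  have huv := skew_mul_skew_mul hs ht (star u * v)
  rw [star_mul, star_star] at huv
  linear_combination (norm := noncomm_ring) skew_mul_mul_skew hs ht u * v -
    star u * skew_mul_skew_mul hs ht v - huv

theorem skew_mul_reverse (hs : s ∈ skewAdjoint R) (ht : t ∈ skewAdjoint R)
    (hp : p ∈ skewAdjoint R) : s * t * p = -(p * t * s) := by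
  have h₁ := trel p hs ht
  have h₂ := trel s hp ht
  rw [skewAdjoint.mem_iff.1 hp] at h₁
  rw [skewAdjoint.mem_iff.1 hs] at h₂
  linear_combination (norm := noncomm_ring) h₁ + h₂

theorem skew_four_eq_zero (hs : s ∈ skewAdjoint R) (ht : t ∈ skewAdjoint R)
    (hp : p ∈ skewAdjoint R) (hq : q ∈ skewAdjoint R) : s * t * p * q = 0 := by
  have h := trel (p * q) hs ht
  rw [star_mul, skewAdjoint.mem_iff.1 hp, skewAdjoint.mem_iff.1 hq] at h
  linear_combination (norm := noncomm_ring) h - skew_mul_reverse hp hq hs * t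

theorem skew_four_middle_eq_zero (hs : s ∈ skewAdjoint R) (ht : t ∈ skewAdjoint R)
    (hp : p ∈ skewAdjoint R) (hq : q ∈ skewAdjoint R) (u : R) : s * t * u * p * q = 0 := by
  have hleft : s * star u * t * p * q = -(s * t * u * p * q) := by
    have h := skew_mul_mul_skew hs ht (star u)
    rw [star_star] at h
    linear_combination (norm := noncomm_ring) h * p * q - u * skew_four_eq_zero hs ht hp hq
  have hright : s * t * p * star u * q = -(s * t * u * p * q) := by
    have h := skew_mul_mul_skew hp hq (star u)
    rw [star_star] at h
    linear_combination (norm := noncomm_ring) s * t * h - skew_four_eq_zero hs ht hp hq * u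
  linear_combination (norm := noncomm_ring) -(s * skew_mul_mul_skew ht hp u * q) + hleft + hright

theorem skew_four_left_middle_eq_zero (hs : s ∈ skewAdjoint R) (ht : t ∈ skewAdjoint R)
    (hp : p ∈ skewAdjoint R) (hq : q ∈ skewAdjoint R) (u v : R) :
    s * u * t * v * p * q = 0 := by
  linear_combination (norm := noncomm_ring) skew_mul_mul_skew hs ht u * v * p * q -
    star u * skew_four_middle_eq_zero hs ht hp hq v -
    skew_four_middle_eq_zero hs ht hp hq (star u * v)

theorem skew_four_interleaved_eq_zero (hs : s ∈ skewAdjoint R) (ht : t ∈ skewAdjoint R)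
    (hp : p ∈ skewAdjoint R) (hq : q ∈ skewAdjoint R) (u v w : R) :
    s * u * t * v * p * w * q = 0 := by
  linear_combination (norm := noncomm_ring) s * u * t * v * skew_mul_mul_skew hp hq w -
    skew_four_left_middle_eq_zero hs ht hp hq u (v * star w) -
    skew_four_left_middle_eq_zero hs ht hp hq u v * star w

end IsTRing

end Involution

section CubeNil

variable {R : Type*} [Ring R] {a b : R}

/-- An element `a` with `a³ = 0` that also satisfies the partial linearization
`a²m + ama + ma² = 0` of this relation for all `m` in the ring. -/
structure IsCubeNil (a : R) : Prop where
  pow_three : a ^ 3 = 0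
  linearized (m : R) : a ^ 2 * m + a * m * a + m * a ^ 2 = 0

namespace IsCubeNil

theorem mul_mul_sq (ha : IsCubeNil a) (m : R) : a * m * a ^ 2 = -(a ^ 2 * m * a) := by
  linear_combination (norm := noncomm_ring) a * ha.linearized m - ha.pow_three * m

theorem polarized (ha : IsCubeNil a) (hb : IsCubeNil b) (hab : IsCubeNil (a + b)) (m : R) :
    (a * b + b * a) * m + (a * m * b + b * m * a) + m * (a * b + b * a) = 0 := by
  linear_combination (norm := noncomm_ring)
    hab.linearized m - ha.linearized m - hb.linearized m

-- On the right-hand side every term contains a difference of two monomials of the same degree.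
theorem sq_mul_sq_mul_mul_mul (ha : IsCubeNil a) (hb : IsCubeNil b) (hab : IsCubeNil (a + b))
    (m : R) :
    a ^ 2 * (b ^ 2 * m * b) * a =
      (a ^ 2 * b * a * b - a ^ 3 * b ^ 2) * m * b + (a ^ 2 * b ^ 2 * a - a ^ 3 * b ^ 2) * m * b +
      (a ^ 2 * b * a - a ^ 3 * b) * m * b ^ 2 + a ^ 2 * b ^ 2 * m * (a * b - b * a) +
      a ^ 2 * b * m * (a * b ^ 2 - b ^ 2 * a) + a ^ 2 * b * m * (b * a * b - b ^ 2 * a) := by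
  have hflip : a ^ 2 * b * m * b ^ 2 * a = -(a ^ 2 * b ^ 2 * m * b * a) := by
    linear_combination (norm := noncomm_ring) a ^ 2 * hb.mul_mul_sq m * a
  have hcube : a ^ 2 * a = 0 := (pow_succ a 2).symm.trans ha.pow_three
  linear_combination (norm := noncomm_ring) 2 * hflip - a ^ 2 * b * ha.polarized hb hab m * b +
    hcube * (2 * b ^ 2 * m * b + b * m * b ^ 2)

theorem exists_zsmul_of_add_eq_three (ha : IsCubeNil a) {i j : ℕ} (hij : i + j = 3) :
    ∃ n : ℤ, ∀ m, a ^ i * m * a ^ j = n • (a ^ 2 * m * a) := by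
  obtain rfl : j = 3 - i := by omega
  have hi : i ≤ 3 := by omega
  interval_cases i
  · exact ⟨0, fun m => by simp [ha.pow_three]⟩
  · exact ⟨-1, fun m => by simp [ha.mul_mul_sq]⟩
  · exact ⟨1, fun m => by simp⟩
  · exact ⟨0, fun m => by simp [ha.pow_three]⟩

end IsCubeNil

end CubeNil

section Words

variable {ι R : Type*} [Ring R] [StarRing R] (x : ι → R)

/-- The value of a letter: `(i, false)` stands for `x i` and `(i, true)` for `(x i)⋆`. -/
def letterVal : ι × Bool → R
  | (i, false) => x i
  | (i, true) => star (x i)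

/-- The value of a word in the letters `x i` and `(x i)⋆`. -/
def wordVal (l : List (ι × Bool)) : R := (l.map (letterVal x)).prod

/-- The multidegree of a word, in which `x i` and `(x i)⋆` both count as `i`. -/
def wordDegree (l : List (ι × Bool)) : Multiset ι := (l.map Prod.fst : List ι)

/-- The transpose of a word. -/
def wordTranspose (l : List (ι × Bool)) : List (ι × Bool) :=
  (l.map fun p => (p.1, !p.2)).reverse

@[simp]
theorem letterVal_not (i : ι) (b : Bool) : letterVal x (i, !b) = star (letterVal x (i, b)) := by
  cases b <;> simp [letterVal]

@[simp]
theorem wordVal_nil : wordVal x [] = 1 := rfl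

@[simp]
theorem wordVal_cons (p : ι × Bool) (l : List (ι × Bool)) :
    wordVal x (p :: l) = letterVal x p * wordVal x l := by
  simp [wordVal]

@[simp]
theorem wordVal_append (l m : List (ι × Bool)) :
    wordVal x (l ++ m) = wordVal x l * wordVal x m := by
  simp [wordVal]

@[simp]
theorem wordVal_replicate (n : ℕ) (p : ι × Bool) :
    wordVal x (List.replicate n p) = letterVal x p ^ n := by
  simp [wordVal]

@[simp]
theorem wordVal_wordTranspose (l : List (ι × Bool)) :
    wordVal x (wordTranspose l) = star (wordVal x l) := by
  induction l with
  | nil => simp [wordTranspose]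
  | cons p l ih =>
    rw [wordVal_cons, star_mul, ← ih]
    simp [wordTranspose, wordVal]

@[simp]
theorem wordDegree_nil : wordDegree ([] : List (ι × Bool)) = 0 := rfl

@[simp]
theorem wordDegree_cons (p : ι × Bool) (l : List (ι × Bool)) :
    wordDegree (p :: l) = {p.1} + wordDegree l := by
  simp [wordDegree]

@[simp]
theorem wordDegree_append (l m : List (ι × Bool)) :
    wordDegree (l ++ m) = wordDegree l + wordDegree m := by
  simp [wordDegree]

@[simp]
theorem wordDegree_replicate (n : ℕ) (p : ι × Bool) :
    wordDegree (List.replicate n p) = Multiset.replicate n p.1 := by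
  simp [wordDegree, Multiset.coe_replicate]

@[simp]
theorem wordDegree_wordTranspose (l : List (ι × Bool)) :
    wordDegree (wordTranspose l) = wordDegree l := by
  simp [wordDegree, wordTranspose, Function.comp_def]

@[simp]
theorem card_wordDegree (l : List (ι × Bool)) : (wordDegree l).card = l.length := by
  simp [wordDegree]

theorem exists_wordDegree_eq (μ : Multiset ι) : ∃ l, wordDegree l = μ :=
  ⟨μ.toList.map (·, false), by simp [wordDegree, Function.comp_def]⟩

theorem count_le_count_wordDegree [DecidableEq ι] (p : ι × Bool) (l : List (ι × Bool)) :
    l.count p ≤ (wordDegree l).count p.1 := by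
  simpa only [wordDegree, Multiset.coe_count] using List.count_le_count_map

/-- A product of letters and of exactly `k` factors `w̄`, each `w` a word of length at most two,
of total multidegree `μ`. -/
inductive BarMonomial : ℕ → Multiset ι → R → Prop
  | word (l : List (ι × Bool)) : BarMonomial 0 (wordDegree l) (wordVal x l)
  | bar (l w : List (ι × Bool)) (hw : w.length ≤ 2) {k : ℕ} {μ : Multiset ι} {r : R}
      (h : BarMonomial k μ r) :
      BarMonomial (k + 1) (wordDegree l + wordDegree w + μ)
        (wordVal x l * skewPart (wordVal x w) * r)

/-- The additive span of the bar monomials with `k` bars and multidegree `μ`. -/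
def barSpan (k : ℕ) (μ : Multiset ι) : AddSubgroup R :=
  AddSubgroup.closure {r | BarMonomial x k μ r}

variable {x}

theorem BarMonomial.mem_barSpan {k : ℕ} {μ : Multiset ι} {r : R} (h : BarMonomial x k μ r) :
    r ∈ barSpan x k μ :=
  AddSubgroup.subset_closure h

theorem barSpan_le {k : ℕ} {μ : Multiset ι} {G : AddSubgroup R} :
    barSpan x k μ ≤ G ↔ ∀ r, BarMonomial x k μ r → r ∈ G :=
  AddSubgroup.closure_le G

theorem BarMonomial.mul {k k' : ℕ} {μ μ' : Multiset ι} {r r' : R} (h : BarMonomial x k μ r)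
    (h' : BarMonomial x k' μ' r') : BarMonomial x (k + k') (μ + μ') (r * r') := by
  induction h with
  | word l =>
    cases h' with
    | word m =>
      rw [← wordDegree_append, ← wordVal_append]
      exact .word (l ++ m)
    | bar m w hw h' =>
      convert BarMonomial.bar (l ++ m) w hw h' using 1
      · omega
      · rw [wordDegree_append]
        abel
      · simp only [wordVal_append, mul_assoc]
  | bar l w hw _ ih =>
    convert BarMonomial.bar l w hw ih using 1
    · omega
    · abel
    · simp only [mul_assoc]

theorem mul_mem_barSpan {k k' n : ℕ} {μ μ' ν : Multiset ι} {r r' : R} (hr : r ∈ barSpan x k μ)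
    (hr' : r' ∈ barSpan x k' μ') (hn : k + k' = n) (hν : μ + μ' = ν) :
    r * r' ∈ barSpan x n ν := by
  subst hn hν
  suffices h : barSpan x k μ ≤ (barSpan x (k + k') (μ + μ')).comap (AddMonoidHom.mulRight r') from
    h hr
  refine barSpan_le.2 fun s hs => ?_
  suffices h : barSpan x k' μ' ≤ (barSpan x (k + k') (μ + μ')).comap (AddMonoidHom.mulLeft s) from
    h hr'
  exact barSpan_le.2 fun s' hs' => (hs.mul hs').mem_barSpan

theorem wordVal_mem_barSpan (l : List (ι × Bool)) :
    wordVal x l ∈ barSpan x 0 (wordDegree l) :=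
  (BarMonomial.word l).mem_barSpan

theorem letterVal_mem_barSpan (p : ι × Bool) : letterVal x p ∈ barSpan x 0 {p.1} := by
  simpa using wordVal_mem_barSpan (x := x) [p]

theorem skewPart_mem_barSpan {w : List (ι × Bool)} (hw : w.length ≤ 2) :
    skewPart (wordVal x w) ∈ barSpan x 1 (wordDegree w) := by
  simpa using (BarMonomial.bar (x := x) [] w hw (.word [])).mem_barSpan

theorem skewPart_letterVal_mem_barSpan (p : ι × Bool) :
    skewPart (letterVal x p) ∈ barSpan x 1 {p.1} := by
  simpa using skewPart_mem_barSpan (x := x) (w := [p]) (by simp)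

theorem commutator_mem_barSpan (p q : ι × Bool) :
    letterVal x p * letterVal x q - letterVal x q * letterVal x p ∈
      barSpan x 1 ({p.1} + {q.1}) := by
  have hpq : skewPart (letterVal x p * letterVal x q) ∈ barSpan x 1 ({p.1} + {q.1}) := by
    simpa using skewPart_mem_barSpan (x := x) (w := [p, q]) (by simp)
  have hq : skewPart (letterVal x q) * letterVal x p ∈ barSpan x 1 ({p.1} + {q.1}) :=
    mul_mem_barSpan (skewPart_letterVal_mem_barSpan q) (letterVal_mem_barSpan p) rfl
      (add_comm _ _)
  have hp : star (letterVal x q) * skewPart (letterVal x p) ∈ barSpan x 1 ({p.1} + {q.1}) := by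
    rw [← letterVal_not]
    exact mul_mem_barSpan (letterVal_mem_barSpan _) (skewPart_letterVal_mem_barSpan p) rfl
      (add_comm _ _)
  rw [commutator_eq_skewPart]
  exact sub_mem (sub_mem hpq hq) hp

theorem wordVal_sub_unstarred_mem_barSpan (l : List (ι × Bool)) :
    wordVal x l - wordVal x (l.map fun p => (p.1, false)) ∈ barSpan x 1 (wordDegree l) := by
  induction l with
  | nil => simp
  | cons p l ih =>
    have hp : letterVal x p - letterVal x (p.1, false) ∈ barSpan x 1 {p.1} := by
      rcases p with ⟨i, _ | _⟩
      · simp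
      · simpa [skewPart, letterVal] using skewPart_letterVal_mem_barSpan (x := x) (i, true)
    have h₁ := mul_mem_barSpan hp (wordVal_mem_barSpan l) rfl (wordDegree_cons p l).symm
    have h₂ := mul_mem_barSpan (letterVal_mem_barSpan (p.1, false)) ih rfl
      (wordDegree_cons p l).symm
    convert add_mem h₁ h₂ using 1
    simp only [List.map_cons, wordVal_cons]
    noncomm_ring

theorem wordVal_sub_mem_barSpan_of_perm {l m : List (ι × Bool)} (h : l.Perm m) :
    wordVal x l - wordVal x m ∈ barSpan x 1 (wordDegree l) := by
  induction h with
  | nil => simp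
  | @cons p l m _ ih =>
    simpa only [wordVal_cons, mul_sub] using
      mul_mem_barSpan (letterVal_mem_barSpan p) ih rfl (wordDegree_cons p l).symm
  | swap p q l =>
    simpa only [wordVal_cons, wordDegree_cons, sub_mul, mul_assoc, add_assoc] using
      mul_mem_barSpan (commutator_mem_barSpan (x := x) q p) (wordVal_mem_barSpan l) rfl rfl
  | trans h _ ih₁ ih₂ =>
    have hdeg : wordDegree _ = wordDegree _ := Multiset.coe_eq_coe.2 (h.map Prod.fst)
    rw [← hdeg] at ih₂
    simpa only [sub_add_sub_cancel] using add_mem ih₁ ih₂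

theorem wordVal_sub_mem_barSpan {l m : List (ι × Bool)} (h : wordDegree l = wordDegree m) :
    wordVal x l - wordVal x m ∈ barSpan x 1 (wordDegree l) := by
  have hl := wordVal_sub_unstarred_mem_barSpan (x := x) l
  have hm := wordVal_sub_unstarred_mem_barSpan (x := x) m
  have hperm := wordVal_sub_mem_barSpan_of_perm (x := x)
    ((Multiset.coe_eq_coe.1 h).map fun i => (i, false))
  have hdeg : wordDegree (l.map fun p => (p.1, false)) = wordDegree l := by
    simp [wordDegree, Function.comp_def]
  simp only [List.map_map, Function.comp_def] at hperm
  rw [hdeg] at hperm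
  rw [← h] at hm
  convert sub_mem (add_mem hl hperm) hm using 1
  abel

theorem wordVal_mul_skewPart_mul_wordVal_sub_mem_barSpan {l l' m m' w : List (ι × Bool)}
    (hl : wordDegree l = wordDegree l') (hm : wordDegree m = wordDegree m') (hw : w.length ≤ 2) :
    wordVal x l * skewPart (wordVal x w) * wordVal x m -
        wordVal x l' * skewPart (wordVal x w) * wordVal x m' ∈
      barSpan x 2 (wordDegree l + wordDegree w + wordDegree m) := by
  have hw' := skewPart_mem_barSpan (x := x) hw
  have h₁ := mul_mem_barSpan (mul_mem_barSpan (wordVal_sub_mem_barSpan (x := x) hl) hw' rfl rfl)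
    (wordVal_mem_barSpan m) rfl rfl
  have h₂ := mul_mem_barSpan (mul_mem_barSpan (wordVal_mem_barSpan l') hw' rfl rfl)
    (wordVal_sub_mem_barSpan (x := x) hm) rfl rfl
  rw [← hl] at h₂
  convert add_mem h₁ h₂ using 1
  noncomm_ring

theorem sq_mul_sq_mul_skewPart_mem_barSpan {y z : ι} (hy : IsCubeNil (x y))
    (hz : IsCubeNil (x z)) (hyz : IsCubeNil (x y + x z)) {w : List (ι × Bool)}
    (hw : w.length ≤ 2) :
    x y ^ 2 * (x z ^ 2 * skewPart (wordVal x w) * x z) * x y ∈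
      barSpan x 2 (wordDegree w + 3 • {y} + 3 • {z}) := by
  set W := skewPart (wordVal x w)
  set G := barSpan x 2 (wordDegree w + 3 • {y} + 3 • {z})
  let a : ι × Bool := (y, false)
  let b : ι × Bool := (z, false)
  let f (l m : List (ι × Bool)) : R := wordVal x l * W * wordVal x m
  have hf {l l' m m' : List (ι × Bool)} (hl : wordDegree l = wordDegree l')
      (hm : wordDegree m = wordDegree m')
      (hdeg : wordDegree l + wordDegree m = 3 • {y} + 3 • {z}) : f l m - f l' m' ∈ G := by
    convert wordVal_mul_skewPart_mul_wordVal_sub_mem_barSpan hl hm hw using 2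
    rw [add_assoc, ← hdeg]
    abel
  have h₁ : f [a, a, b, a, b] [b] - f [a, a, a, b, b] [b] ∈ G := by
    apply hf <;> simp only [a, b, wordDegree_cons, wordDegree_nil] <;> abel
  have h₂ : f [a, a, b, b, a] [b] - f [a, a, a, b, b] [b] ∈ G := by
    apply hf <;> simp only [a, b, wordDegree_cons, wordDegree_nil] <;> abel
  have h₃ : f [a, a, b, a] [b, b] - f [a, a, a, b] [b, b] ∈ G := by
    apply hf <;> simp only [a, b, wordDegree_cons, wordDegree_nil] <;> abel
  have h₄ : f [a, a, b, b] [a, b] - f [a, a, b, b] [b, a] ∈ G := by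
    apply hf <;> simp only [a, b, wordDegree_cons, wordDegree_nil] <;> abel
  have h₅ : f [a, a, b] [a, b, b] - f [a, a, b] [b, b, a] ∈ G := by
    apply hf <;> simp only [a, b, wordDegree_cons, wordDegree_nil] <;> abel
  have h₆ : f [a, a, b] [b, a, b] - f [a, a, b] [b, b, a] ∈ G := by
    apply hf <;> simp only [a, b, wordDegree_cons, wordDegree_nil] <;> abel
  convert add_mem (add_mem (add_mem (add_mem (add_mem h₁ h₂) h₃) h₄) h₅) h₆ using 1
  rw [hy.sq_mul_sq_mul_mul_mul hz hyz W]
  simp only [f, a, b, wordVal_cons, wordVal_nil, letterVal]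
  noncomm_ring

theorem pow_mul_pow_mul_skewPart_mem_barSpan {y z : ι} (hy : IsCubeNil (x y))
    (hz : IsCubeNil (x z)) (hyz : IsCubeNil (x y + x z)) {w : List (ι × Bool)}
    (hw : w.length ≤ 2) {i i' j j' : ℕ} (hi : i + i' = 3) (hj : j + j' = 3) :
    x y ^ i * (x z ^ j * skewPart (wordVal x w) * x z ^ j') * x y ^ i' ∈
      barSpan x 2 (wordDegree w + 3 • {y} + 3 • {z}) := by
  obtain ⟨n, hn⟩ := hy.exists_zsmul_of_add_eq_three hi
  obtain ⟨n', hn'⟩ := hz.exists_zsmul_of_add_eq_three hj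
  rw [hn, hn', mul_smul_comm, smul_mul_assoc]
  exact zsmul_mem (zsmul_mem (sq_mul_sq_mul_skewPart_mem_barSpan hy hz hyz hw) _) _

theorem exists_eq_wordDegree_add_nsmul {μ : Multiset ι} {y z : ι} (hyz : y ≠ z) {i j : ℕ}
    [DecidableEq ι] (hi : i ≤ μ.count y) (hj : j ≤ μ.count z) :
    ∃ l, μ = wordDegree l + (i • {y} + j • {z}) := by
  have hle : i • {y} + j • {z} ≤ μ := by
    refine Multiset.le_iff_count.2 fun k => ?_
    rw [Multiset.count_add, Multiset.count_nsmul, Multiset.count_nsmul, Multiset.count_singleton,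
      Multiset.count_singleton]
    by_cases hky : k = y
    · simpa [hky, hyz] using hi
    · by_cases hkz : k = z
      · simpa [hkz, hyz.symm] using hj
      · simp [hky, hkz]
  obtain ⟨l, hl⟩ := exists_wordDegree_eq (μ - (i • {y} + j • {z}))
  exact ⟨l, by rw [hl, Multiset.sub_add_cancel hle]⟩

theorem exists_add_eq_of_le_add {n a b : ℕ} (h : n ≤ a + b) :
    ∃ i j, i + j = n ∧ i ≤ a ∧ j ≤ b :=
  ⟨min n a, n - min n a, by omega⟩

theorem wordVal_mul_skewPart_mul_wordVal_mem_barSpan [DecidableEq ι] {y z : ι} (hne : y ≠ z)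
    (hy : IsCubeNil (x y)) (hz : IsCubeNil (x z)) (hyz : IsCubeNil (x y + x z))
    {u v w : List (ι × Bool)} (hw : w.length ≤ 2)
    (hcy : 3 ≤ (wordDegree u + wordDegree v).count y)
    (hcz : 3 ≤ (wordDegree u + wordDegree v).count z) :
    wordVal x u * skewPart (wordVal x w) * wordVal x v ∈
      barSpan x 2 (wordDegree u + wordDegree w + wordDegree v) := by
  rw [Multiset.count_add] at hcy hcz
  obtain ⟨i, i', hi, hiu, hiv⟩ := exists_add_eq_of_le_add hcy
  obtain ⟨j, j', hj, hju, hjv⟩ := exists_add_eq_of_le_add hcz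
  obtain ⟨p, hp⟩ := exists_eq_wordDegree_add_nsmul hne hiu hju
  obtain ⟨q, hq⟩ := exists_eq_wordDegree_add_nsmul hne hiv hjv
  have hu : wordDegree u =
      wordDegree (p ++ .replicate i (y, false) ++ .replicate j (z, false)) := by
    simp [hp, Multiset.nsmul_singleton]
  have hv : wordDegree v =
      wordDegree (.replicate j' (z, false) ++ .replicate i' (y, false) ++ q) := by
    simp only [hq, wordDegree_append, wordDegree_replicate, Multiset.nsmul_singleton]
    abel
  have hcore := mul_mem_barSpan (mul_mem_barSpan (wordVal_mem_barSpan p)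
    (pow_mul_pow_mul_skewPart_mem_barSpan hy hz hyz hw hi hj) rfl rfl) (wordVal_mem_barSpan q)
    (zero_add 2) (ν := wordDegree u + wordDegree w + wordDegree v) (by
      nth_rw 1 [hp, hq, ← hi]
      rw [← hj, add_nsmul, add_nsmul]
      abel)
  convert add_mem (wordVal_mul_skewPart_mul_wordVal_sub_mem_barSpan hu hv hw) hcore using 1
  simp only [wordVal_append, wordVal_replicate, letterVal]
  noncomm_ring

-- `skew_mul_mul_skew_mul` moves the letters between the first two bars of a product to the left of
-- the first bar or to the right of the second; iterating this leaves at most the letters of the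
-- short words under the later bars to the right of the front part `u * s * v`.
theorem BarMonomial.wordVal_mul_skew_mul_mem [IsTRing R] {k : ℕ} {μ : Multiset ι} {r : R}
    (h : BarMonomial x k μ r) {s : R} (hs : s ∈ skewAdjoint R) {l : List (ι × Bool)}
    {G : AddSubgroup R}
    (hG : ∀ u v ν t, BarMonomial x k ν t → ν.card ≤ 2 * k →
      wordDegree u + wordDegree v + ν = wordDegree l + μ →
        wordVal x u * s * wordVal x v * t ∈ G) :
    wordVal x l * s * r ∈ G := by
  induction h generalizing s l G with
  | word m => simpa using hG l m 0 1 (.word []) (by simp) (by simp)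
  | @bar m w hw k' μ' r' _ ih =>
    set b := skewPart (wordVal x w)
    have hb : b ∈ skewAdjoint R := skewPart_mem_skewAdjoint _
    have hmem (u v ν t) (ht : BarMonomial x k' ν t) (hν : ν.card ≤ 2 * k')
        (hdeg : wordDegree u + wordDegree v + ν = wordDegree l + wordDegree m + μ') :
        wordVal x u * s * wordVal x v * (b * t) ∈ G := by
      refine hG u v (wordDegree w + ν) (b * t) ?_ ?_ ?_
      · simpa using BarMonomial.bar [] w hw ht
      · rw [Multiset.card_add, card_wordDegree]
        omega
      · rw [add_left_comm, hdeg]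
        abel
    suffices hr : wordVal x m * b * r' ∈ G.comap (AddMonoidHom.mulLeft (wordVal x l * s)) by
      simpa [mul_assoc] using hr
    refine ih hb fun u v ν t ht hν hdeg => ?_
    have h₁ := hmem (l ++ wordTranspose u ++ v) [] ν t ht hν (by simp [add_assoc, ← hdeg])
    have h₂ := hmem (l ++ wordTranspose u) (wordTranspose v) ν t ht hν (by simp [add_assoc, ← hdeg])
    have h₃ := hmem l (wordTranspose v ++ u) ν t ht hν (by
      simp only [wordDegree_append, wordDegree_wordTranspose, add_assoc, ← hdeg]
      abel)
    simp only [wordVal_append, wordVal_wordTranspose, wordVal_nil] at h₁ h₂ h₃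
    rw [AddSubgroup.mem_comap, AddMonoidHom.coe_mulLeft]
    convert add_mem (add_mem (nsmul_mem h₁ 2) h₂) h₃ using 1
    linear_combination (norm := noncomm_ring)
      wordVal x l * IsTRing.skew_mul_mul_skew_mul hs hb (wordVal x u) (wordVal x v) * t

theorem exists_ne_notMem_of_card_add_two_le {S : Finset ι} {ν : Multiset ι}
    (h : ν.card + 2 ≤ S.card) : ∃ y ∈ S, ∃ z ∈ S, y ≠ z ∧ y ∉ ν ∧ z ∉ ν := by
  classical
  have hcard : 1 < (S \ ν.toFinset).card := by
    have h₁ := Finset.le_card_sdiff ν.toFinset S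
    have h₂ := ν.toFinset_card_le
    omega
  obtain ⟨y, hy, z, hz, hne⟩ := Finset.one_lt_card.1 hcard
  rw [Finset.mem_sdiff, Multiset.mem_toFinset] at hy hz
  exact ⟨y, hy.1, z, hz.1, hne, hy.2, hz.2⟩

theorem barSpan_zero_le_barSpan_one [DecidableEq ι] {μ : Multiset ι} {y : ι}
    (hy : IsCubeNil (x y)) (hcy : 3 ≤ μ.count y) : barSpan x 0 μ ≤ barSpan x 1 μ := by
  refine barSpan_le.2 fun r hr => ?_
  cases hr with
  | word l =>
    obtain ⟨ν, hν⟩ := Multiset.le_iff_exists_add.1 (Multiset.le_count_iff_replicate_le.1 hcy)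
    obtain ⟨m, rfl⟩ := exists_wordDegree_eq ν
    have hdeg : wordDegree l = wordDegree (.replicate 3 (y, false) ++ m) := by
      rw [hν, wordDegree_append, wordDegree_replicate]
    simpa only [wordVal_append, wordVal_replicate, letterVal, hy.pow_three, zero_mul, sub_zero]
      using wordVal_sub_mem_barSpan (x := x) hdeg

theorem barSpan_succ_le_barSpan_succ [DecidableEq ι] [IsTRing R] {k : ℕ} {μ : Multiset ι}
    (hx : ∀ i, IsCubeNil (x i)) (hxx : ∀ i j, IsCubeNil (x i + x j)) {S : Finset ι}
    (hS : 2 * k + 4 ≤ S.card) (hμ : ∀ i ∈ S, 3 ≤ μ.count i) :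
    barSpan x (k + 1) μ ≤ barSpan x (k + 2) μ := by
  refine barSpan_le.2 fun r hr => ?_
  cases hr with
  | @bar l w hw _ μ' _ hr =>
    refine hr.wordVal_mul_skew_mul_mem (skewPart_mem_skewAdjoint _) fun u v ν t ht hν hdeg => ?_
    have hμ_eq : wordDegree l + wordDegree w + μ' =
        wordDegree u + wordDegree v + (wordDegree w + ν) := by
      rw [add_left_comm, hdeg]
      abel
    have hcard : (wordDegree w + ν).card + 2 ≤ S.card := by
      rw [Multiset.card_add, card_wordDegree]
      omega
    obtain ⟨y, hy, z, hz, hne, hyν, hzν⟩ := exists_ne_notMem_of_card_add_two_le hcard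
    have hcount {i : ι} (hi : i ∈ S) (hiν : i ∉ wordDegree w + ν) :
        3 ≤ (wordDegree u + wordDegree v).count i := by
      simpa only [hμ_eq, Multiset.count_add _ _ (wordDegree w + ν),
        Multiset.count_eq_zero_of_notMem hiν, add_zero] using hμ i hi
    exact mul_mem_barSpan (wordVal_mul_skewPart_mul_wordVal_mem_barSpan hne (hx y) (hx z)
      (hxx y z) hw (hcount hy hyν) (hcount hz hzν)) ht.mem_barSpan (add_comm _ _)
      (by rw [hμ_eq]; abel)

theorem barSpan_zero_le_barSpan [DecidableEq ι] [IsTRing R] {μ : Multiset ι}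
    (hx : ∀ i, IsCubeNil (x i)) (hxx : ∀ i j, IsCubeNil (x i + x j)) {S : Finset ι}
    (hμ : ∀ i ∈ S, 3 ≤ μ.count i) {k : ℕ} (hS : 2 * k ≤ S.card) :
    barSpan x 0 μ ≤ barSpan x k μ := by
  induction k with
  | zero => exact le_rfl
  | succ k ih =>
    refine (ih (by omega)).trans ?_
    cases k with
    | zero =>
      obtain ⟨y, hy⟩ := Finset.card_pos.1 (by omega : 0 < S.card)
      exact barSpan_zero_le_barSpan_one (hx y) (hμ y hy)
    | succ k => exact barSpan_succ_le_barSpan_succ hx hxx (by omega) hμ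

theorem barSpan_four_eq_bot [IsTRing R] (μ : Multiset ι) : barSpan x 4 μ = ⊥ := by
  refine eq_bot_iff.2 (barSpan_le.2 fun r hr => ?_)
  rcases hr with _ | @⟨l₁, w₁, -, _, _, _, _ | @⟨l₂, w₂, -, _, _, _,
    _ | @⟨l₃, w₃, -, _, _, _, _ | @⟨l₄, w₄, -, _, _, r, -⟩⟩⟩⟩
  rw [AddSubgroup.mem_bot]
  have h := IsTRing.skew_four_interleaved_eq_zero (skewPart_mem_skewAdjoint (wordVal x w₁))
    (skewPart_mem_skewAdjoint (wordVal x w₂)) (skewPart_mem_skewAdjoint (wordVal x w₃))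
    (skewPart_mem_skewAdjoint (wordVal x w₄)) (wordVal x l₂) (wordVal x l₃) (wordVal x l₄)
  linear_combination (norm := noncomm_ring) wordVal x l₁ * h * r

theorem wordVal_eq_zero [DecidableEq ι] [IsTRing R] (hx : ∀ i, IsCubeNil (x i))
    (hxx : ∀ i j, IsCubeNil (x i + x j)) {S : Finset ι} (hS : 8 ≤ S.card)
    {l : List (ι × Bool)} (hl : ∀ i ∈ S, 3 ≤ (wordDegree l).count i) : wordVal x l = 0 := by
  have h := barSpan_zero_le_barSpan hx hxx hl (k := 4) hS (wordVal_mem_barSpan l)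
  rwa [barSpan_four_eq_bot, AddSubgroup.mem_bot] at h

end Words

section Transpose

variable {F : Type} [Field F] {d : ℕ}

@[simp]
theorem tp_ι (p : Ltr d) : tp F d (FreeAlgebra.ι F p) = FreeAlgebra.ι F (p.1, !p.2) := by
  simp [tp]

@[simp]
theorem tp_algebraMap (c : F) : tp F d (algebraMap F _ c) = algebraMap F _ c := by simp [tp]

@[simp]
theorem tp_add (a b : FA F d) : tp F d (a + b) = tp F d a + tp F d b := by simp [tp]

@[simp]
theorem tp_mul (a b : FA F d) : tp F d (a * b) = tp F d b * tp F d a := by simp [tp]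

@[simp]
theorem tp_neg (a : FA F d) : tp F d (-a) = -tp F d a := by simp [tp]

@[simp]
theorem tp_sub (a b : FA F d) : tp F d (a - b) = tp F d a - tp F d b := by simp [tp]

@[simp]
theorem tp_pow (a : FA F d) (n : ℕ) : tp F d (a ^ n) = tp F d a ^ n := by simp [tp]

theorem tp_smul (c : F) (a : FA F d) : tp F d (c • a) = c • tp F d a := by simp [tp]

@[simp]
theorem tp_tp (a : FA F d) : tp F d (tp F d a) = a := by
  induction a using FreeAlgebra.induction with
  | grade0 c => simp
  | grade1 p => simp
  | mul a b ha hb => rw [tp_mul, tp_mul, ha, hb]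
  | add a b ha hb => rw [tp_add, tp_add, ha, hb]

theorem tp_bar (a : FA F d) : tp F d (bar F d a) = -bar F d a := by
  simp [bar]

theorem tp_Trel (a b c : FA F d) : tp F d (Trel F d a b c) = Trel F d (tp F d a) c b := by
  simp only [Trel, tp_add, tp_mul, tp_bar, tp_tp]
  noncomm_ring

theorem wordOf_append (l m : List (Ltr d)) :
    wordOf F d (l ++ m) = wordOf F d l * wordOf F d m := by simp [wordOf]

theorem tp_wordOf (l : List (Ltr d)) : tp F d (wordOf F d l) = wordOf F d (wordTranspose l) := by
  induction l with
  | nil => simp [tp, wordOf, wordTranspose]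
  | cons p l ih =>
    have hcons : wordTranspose (p :: l) = wordTranspose l ++ [(p.1, !p.2)] := by
      simp [wordTranspose]
    rw [hcons, wordOf_append, ← ih]
    simp [wordOf]

theorem wordOf_mem_MFsub {l : List (Ltr d)} (hl : l ≠ []) : wordOf F d l ∈ MFsub F d :=
  Submodule.subset_span ⟨l, hl, rfl⟩

theorem ι_mem_MFsub (p : Ltr d) : FreeAlgebra.ι F p ∈ MFsub F d := by
  simpa [wordOf] using wordOf_mem_MFsub (F := F) (List.cons_ne_nil p [])

theorem mul_mem_MFsub {a b : FA F d} (ha : a ∈ MFsub F d) (hb : b ∈ MFsub F d) :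
    a * b ∈ MFsub F d := by
  suffices h : MFsub F d * MFsub F d ≤ MFsub F d from h (Submodule.mul_mem_mul ha hb)
  rw [MFsub, Submodule.span_mul_span, Submodule.span_le]
  rintro _ ⟨_, ⟨l, hl, rfl⟩, _, ⟨m, -, rfl⟩, rfl⟩
  exact Submodule.subset_span ⟨l ++ m, by simp [hl], (wordOf_append l m).symm⟩

theorem tp_mem_MFsub {a : FA F d} (ha : a ∈ MFsub F d) : tp F d a ∈ MFsub F d := by
  induction ha using Submodule.span_induction with
  | mem _ h =>
    obtain ⟨l, hl, rfl⟩ := h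
    rw [tp_wordOf]
    exact wordOf_mem_MFsub (by simpa [wordTranspose] using hl)
  | zero => simp [tp]
  | add a b _ _ ha hb => simpa using add_mem ha hb
  | smul c a _ ha => simpa [tp_smul] using Submodule.smul_mem _ c ha

theorem exists_eq_algebraMap_add_mem_MFsub (a : FA F d) :
    ∃ c : F, ∃ b ∈ MFsub F d, a = algebraMap F _ c + b := by
  induction a using FreeAlgebra.induction with
  | grade0 c => exact ⟨c, 0, zero_mem _, by simp⟩
  | grade1 p => exact ⟨0, FreeAlgebra.ι F p, ι_mem_MFsub p, by simp⟩
  | mul a b ha hb =>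
    obtain ⟨c, a, ha, rfl⟩ := ha
    obtain ⟨e, b, hb, rfl⟩ := hb
    refine ⟨c * e, c • b + e • a + a * b, add_mem (add_mem (Submodule.smul_mem _ _ hb)
      (Submodule.smul_mem _ _ ha)) (mul_mem_MFsub ha hb), ?_⟩
    rw [Algebra.smul_def, Algebra.smul_def, map_mul, mul_add, add_mul, add_mul,
      Algebra.commutes e a]
    abel
  | add a b ha hb =>
    obtain ⟨c, a, ha, rfl⟩ := ha
    obtain ⟨e, b, hb, rfl⟩ := hb
    exact ⟨c + e, a + b, add_mem ha hb, by rw [map_add]; abel⟩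

theorem tp_mem_idealA {a : FA F d} (ha : a ∈ idealA F d) : tp F d a ∈ idealA F d := by
  let φ : FA F d →+* (FA F d)ᵐᵒᵖ :=
    (FreeAlgebra.lift F fun p : Ltr d => op (FreeAlgebra.ι F (p.1, !p.2))).toRingHom
  suffices h : idealA F d ≤ (idealA F d).op.comap φ from
    TwoSidedIdeal.mem_op_iff.1 ((TwoSidedIdeal.mem_comap φ).1 (h ha))
  refine TwoSidedIdeal.span_le.2 fun r hr => ?_
  rw [SetLike.mem_coe, TwoSidedIdeal.mem_comap, TwoSidedIdeal.mem_op_iff]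
  change tp F d r ∈ idealA F d
  refine TwoSidedIdeal.subset_span ?_
  rcases hr with ⟨a, ha, rfl⟩ | ⟨a, ha, b, hb, c, hc, rfl⟩
  · exact .inl ⟨tp F d a, tp_mem_MFsub ha, tp_pow a 3⟩
  · exact .inr ⟨tp F d a, tp_mem_MFsub ha, c, hc, b, hb, tp_Trel a b c⟩

end Transpose

section Quotient

variable {F : Type} [Field F] {d : ℕ}

variable (F d) in
/-- The algebra `A_{3,d}` with a unit adjoined. -/
abbrev UnitalA := (idealA F d).ringCon.Quotient

/-- The quotient map onto `A_{3,d}` with a unit adjoined. -/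
def UnitalA.mk : FA F d →+* UnitalA F d := (idealA F d).ringCon.mk'

namespace UnitalA

theorem mk_eq_zero_iff {a : FA F d} : mk a = 0 ↔ a ∈ idealA F d := by
  rw [← TwoSidedIdeal.mem_ker, mk, TwoSidedIdeal.ker_ringCon_mk']

theorem mk_surjective : Function.Surjective (mk : FA F d →+* UnitalA F d) :=
  RingCon.mk'_surjective _

theorem mk_tp_congr {a b : FA F d} (h : mk a = mk b) : mk (tp F d a) = mk (tp F d b) := by
  rw [← sub_eq_zero, ← map_sub, mk_eq_zero_iff] at h ⊢
  rw [← tp_sub]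
  exact tp_mem_idealA h

/-- The involution induced by the transpose. -/
instance : StarRing (UnitalA F d) where
  star := Quotient.map' (tp F d) fun _ _ h => Quotient.exact (mk_tp_congr (Quotient.sound h))
  star_involutive := by
    rintro ⟨a⟩
    exact congrArg mk (tp_tp a)
  star_mul := by
    rintro ⟨a⟩ ⟨b⟩
    exact congrArg mk (tp_mul a b)
  star_add := by
    rintro ⟨a⟩ ⟨b⟩
    exact congrArg mk (tp_add a b)

@[simp]
theorem star_mk (a : FA F d) : star (mk a) = mk (tp F d a) := rfl

theorem skewPart_mk (a : FA F d) : skewPart (mk a) = mk (bar F d a) := by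
  rw [skewPart, star_mk, bar, map_sub]

theorem commute_mk_algebraMap (c : F) (a : FA F d) : Commute (mk (algebraMap F _ c)) (mk a) :=
  Commute.map (Algebra.commutes c a) mk

theorem wordVal_mk_ι (l : List (Ltr d)) :
    wordVal (fun i => mk (FreeAlgebra.ι F (i, false))) l = mk (wordOf F d l) := by
  induction l with
  | nil => simp [wordOf]
  | cons p l ih =>
    have hp : letterVal (fun i => mk (FreeAlgebra.ι F (i, false))) p = mk (FreeAlgebra.ι F p) := by
      rcases p with ⟨i, _ | _⟩ <;> simp [letterVal]
    rw [wordVal_cons, ih, hp, ← map_mul]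
    simp [wordOf]

theorem mk_pow_three {a : FA F d} (ha : a ∈ MFsub F d) : mk a ^ 3 = 0 := by
  rw [← map_pow, mk_eq_zero_iff]
  exact TwoSidedIdeal.subset_span (.inl ⟨a, ha, rfl⟩)

theorem mk_Trel {a b c : FA F d} (ha : a ∈ MFsub F d) (hb : b ∈ MFsub F d) (hc : c ∈ MFsub F d) :
    mk (Trel F d a b c) = 0 :=
  mk_eq_zero_iff.2 (TwoSidedIdeal.subset_span (.inr ⟨a, ha, b, hb, c, hc, rfl⟩))

variable [CharP F 3]

theorem three_eq_zero : (3 : UnitalA F d) = 0 := by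
  have h : (3 : F) = 0 := by exact_mod_cast CharP.cast_eq_zero F 3
  rw [← map_ofNat (mk.comp (algebraMap F (FA F d))) 3, h, map_zero]

theorem isCubeNil_mk {a : FA F d} (ha : a ∈ MFsub F d) : IsCubeNil (mk a) where
  pow_three := mk_pow_three ha
  linearized m := by
    obtain ⟨m, rfl⟩ := mk_surjective m
    obtain ⟨c, b, hb, rfl⟩ := exists_eq_algebraMap_add_mem_MFsub m
    have hadd := mk_pow_three (add_mem hb ha)
    have hsub := mk_pow_three (sub_mem hb ha)
    have hb := mk_pow_three hb
    have hcomm := (commute_mk_algebraMap c a).eq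
    rw [map_add] at hadd ⊢
    rw [map_sub] at hsub
    generalize mk (algebraMap F (FA F d) c) = C at *
    generalize mk a = A at *
    generalize mk b = B at *
    linear_combination (norm := noncomm_ring)
      (A * A * C + A * A * B + A * B * A + B * A * A) * three_eq_zero (F := F) (d := d) -
        hadd - hsub + 2 * hb + A * hcomm + hcomm * A + A * hcomm

theorem exists_mem_MFsub_of_mem_skewAdjoint {s : UnitalA F d} (hs : s ∈ skewAdjoint (UnitalA F d)) :
    ∃ b ∈ MFsub F d, s = mk (bar F d b) := by
  obtain ⟨a, rfl⟩ := mk_surjective s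
  obtain ⟨c, b, hb, rfl⟩ := exists_eq_algebraMap_add_mem_MFsub a
  -- In characteristic three `s - s⋆ = 2 s = -s`.
  refine ⟨-b, neg_mem hb, ?_⟩
  have hbar : bar F d (-b) = -bar F d (algebraMap F _ c + b) := by
    simp only [bar, tp_neg, tp_add, tp_algebraMap]
    abel
  rw [hbar, map_neg, ← skewPart_mk, skewPart, skewAdjoint.mem_iff.1 hs]
  linear_combination (norm := noncomm_ring)
    mk (algebraMap F _ c + b) * three_eq_zero (F := F) (d := d)

instance : IsTRing (UnitalA F d) where
  trel r s t hs ht := by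
    obtain ⟨b, hb, rfl⟩ := exists_mem_MFsub_of_mem_skewAdjoint hs
    obtain ⟨c, hc, rfl⟩ := exists_mem_MFsub_of_mem_skewAdjoint ht
    obtain ⟨a, rfl⟩ := mk_surjective r
    obtain ⟨e, a, ha, rfl⟩ := exists_eq_algebraMap_add_mem_MFsub a
    have hT := mk_Trel ha hb hc
    simp only [Trel, map_add, map_mul] at hT
    rw [star_mk, tp_add, tp_algebraMap, map_add, map_add]
    have hb := (commute_mk_algebraMap e (bar F d b)).eq
    have hc := (commute_mk_algebraMap e (bar F d c)).eq
    generalize mk (algebraMap F (FA F d) e) = E at *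
    linear_combination (norm := noncomm_ring) hT + hb * mk (bar F d c) +
      2 * mk (bar F d b) * hc +
        mk (bar F d b) * mk (bar F d c) * E * three_eq_zero (F := F) (d := d)

end UnitalA

end Quotient

theorem stmt13_general (F : Type) [Field F] [CharP F 3] (d : ℕ) (S : Finset (Fin d))
    (hS : 8 ≤ S.card) (l : List (Ltr d)) (hdeg : ∀ i ∈ S, 3 ≤ (wordDegree l).count i) :
    wordOf F d l ∈ idealA F d := by
  rw [← UnitalA.mk_eq_zero_iff, ← UnitalA.wordVal_mk_ι]
  refine wordVal_eq_zero (fun i => UnitalA.isCubeNil_mk (ι_mem_MFsub _)) (fun i j => ?_) hS hdeg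
  rw [← map_add]
  exact UnitalA.isCubeNil_mk (add_mem (ι_mem_MFsub _) (ι_mem_MFsub _))

/-- if `char F = 3`, `d ≥ 8`, and `u` is a word with `deg_{x_i}(u) = 3` for
`1 ≤ i ≤ 8`, then `u = 0` in `A_{3,d}`. -/
theorem stmt13 (F : Type) [Field F] [Infinite F] [CharP F 3] (d : ℕ) (hd : 8 ≤ d)
    (l : List (Ltr d)) (hl : l ≠ [])
    (hdeg : ∀ i : Fin d, (i : ℕ) < 8 → l.count ((i, false) : Ltr d) = 3) :
    wordOf F d l ∈ idealA F d :=
  stmt13_general F d {i : Fin d | (i : ℕ) < 8} (by simp [Fin.card_filter_val_lt, hd]) l fun i hi =>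
    (hdeg i (Finset.mem_filter_univ i |>.1 hi)).ge.trans (count_le_count_wordDegree _ l)
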